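/- There exists a constant c > 0 such that for every ε > 0, lim_{L→∞} P^+_{unif,L}( sup_{t∈[0,1]} |π̃^L_t − c t e⃗_1| ≤ ε ) = 1, where |·| denotes the Euclidean norm on ℝ². In words: the uniform 2-sided prudent walk, rescaled by its length, concentrates on the straight line segment of direction (1,1). -/

import Mathlib

open Filter Set

/-- One admissible step of a nearest-neighbour walk on `ℤ²`. -/
def IsStep (s : ℤ × ℤ) : Prop :=
  s = (1, 0) ∨ s = (-1, 0) ∨ s = (0, 1) ∨ s = (0, -1)

/-- The set `Ω_L` of prudent paths of length `L`. -/
def prudentSet (L : ℕ) : Set (Fin (L + 1) → ℤ × ℤ) :=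
  {π | π 0 = (0, 0) ∧ ∀ i : Fin L,
    IsStep (π i.succ - π i.castSucc) ∧
    ∀ k : ℕ, 1 ≤ k → ∀ j : Fin (L + 1), j ≤ i.castSucc →
      π i.castSucc + (k : ℤ) • (π i.succ - π i.castSucc) ≠ π j}

/-- The uniform probability of a set `A` of paths under `P_{unif,L}`. -/
noncomputable def probUnif (L : ℕ) (A : Set (Fin (L + 1) → ℤ × ℤ)) : ℝ :=
  (Nat.card ↥(A ∩ prudentSet L) : ℝ) / (Nat.card ↥(prudentSet L) : ℝ)

/-- Coercion `ℤ² → ℝ²`. -/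
def toR (p : ℤ × ℤ) : ℝ × ℝ := ((p.1 : ℝ), (p.2 : ℝ))

/-- The rescaled interpolated path `π̃^L : [0,1] → ℝ²`. -/
noncomputable def rescaled (L : ℕ) (π : Fin (L + 1) → ℤ × ℤ) (t : ℝ) : ℝ × ℝ :=
  let n : ℕ := ⌊t * L⌋₊
  let p : ℝ × ℝ := toR (π ⟨min n L, by omega⟩)
  let q : ℝ × ℝ := toR (π ⟨min (n + 1) L, by omega⟩)
  (L : ℝ)⁻¹ • (p + (t * L - (n : ℝ)) • (q - p))

/-- Euclidean norm on `ℝ²`. -/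
noncomputable def enorm2 (v : ℝ × ℝ) : ℝ := Real.sqrt (v.1 ^ 2 + v.2 ^ 2)

/-- The four diagonal directions. -/
def evec : ℕ → ℝ × ℝ
  | 1 => (1, 1)
  | 2 => (-1, 1)
  | 3 => (-1, -1)
  | 4 => (1, -1)
  | _ => (0, 0)

/-- The set `Ω_L^+` of 2-sided prudent paths of length `L` (north-east direction):
prudent paths that never take a step in the direction of the quadrant
`{(x,y) : x ≤ 0 ∧ y ≤ 0}`, whose endpoint is the top-right corner of the smallest
rectangle containing the path, and which start with an east step. -/
def twoSidedSet (L : ℕ) : Set (Fin (L + 1) → ℤ × ℤ) :=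
  {π | π ∈ prudentSet L ∧
    (∀ i : Fin L, ∀ k : ℕ, 1 ≤ k →
      ¬((π i.castSucc + (k : ℤ) • (π i.succ - π i.castSucc)).1 ≤ 0 ∧
        (π i.castSucc + (k : ℤ) • (π i.succ - π i.castSucc)).2 ≤ 0)) ∧
    (∀ i : Fin (L + 1),
      (π i).1 ≤ (π (Fin.last L)).1 ∧ (π i).2 ≤ (π (Fin.last L)).2) ∧
    (∀ h : 0 < L, π ⟨1, by omega⟩ = (1, 0))}

/-- The uniform probability of a set `A` of paths under `P^+_{unif,L}`. -/
noncomputable def probUnifPlus (L : ℕ) (A : Set (Fin (L + 1) → ℤ × ℤ)) : ℝ :=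
  (Nat.card ↥(A ∩ twoSidedSet L) : ℝ) / (Nat.card ↥(twoSidedSet L) : ℝ)

/-!
While a 2-sided prudent walk stands on the right or the top side of its bounding box, its
continuations depend only on its distance to the top-right corner and on whether it has just arrived
on the current extremal line, moves towards the corner, or moves away from it. Counting walks thus
amounts to iterating a transfer operator. This operator has a positive eigenfunction with eigenvalue
`z⁻¹`, and Doob's transform turns it into a Markov chain: up to the bounded eigenfunction, the
counting measure on walks of length `L` is `z⁻ᴸ` times the law of the chain.

The distance to the corner has an exponential Lyapunov function. It is therefore `O(log L)` with
high probability, so that a walk can be closed at the corner at the cost of a polynomial factor: the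
uniform measure is dominated by the chain up to a power of `L`. Under the chain, the sum and the
difference of the coordinates, corrected by functions of the distance and the phase, have constant
and zero drift respectively, with bounded increments. Their deviations are therefore exponentially
small, which beats both the polynomial factor and the union bound over the `L + 1` times.
-/

/-- The array `a L i`, for `i ≤ L`, decays exponentially in `L`, uniformly in `i`. -/
def ExpSmall (a : ℕ → ℕ → ℝ) : Prop :=
  ∃ κ C : ℝ, 0 < κ ∧ 0 ≤ C ∧ ∀ L, ∀ i ≤ L, a L i ≤ C * Real.exp (-(κ * L))

namespace ExpSmall

variable {a b : ℕ → ℕ → ℝ}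

lemma mono (hb : ExpSmall b) (hab : ∀ L, ∀ i ≤ L, a L i ≤ b L i) : ExpSmall a := by
  obtain ⟨κ, C, hκ, hC, h⟩ := hb
  exact ⟨κ, C, hκ, hC, fun L i hi => (hab L i hi).trans (h L i hi)⟩

lemma add (ha : ExpSmall a) (hb : ExpSmall b) : ExpSmall fun L i => a L i + b L i := by
  obtain ⟨κ, C, hκ, hC, h⟩ := ha
  obtain ⟨κ', C', hκ', hC', h'⟩ := hb
  refine ⟨min κ κ', C + C', lt_min hκ hκ', add_nonneg hC hC', fun L i hi => ?_⟩
  calc a L i + b L i ≤ C * Real.exp (-(κ * L)) + C' * Real.exp (-(κ' * L)) :=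
        add_le_add (h L i hi) (h' L i hi)
    _ ≤ C * Real.exp (-(min κ κ' * L)) + C' * Real.exp (-(min κ κ' * L)) := by
        gcongr
        exacts [min_le_left .., min_le_right ..]
    _ = (C + C') * Real.exp (-(min κ κ' * L)) := by ring

lemma const_mul (ha : ExpSmall a) {c : ℝ} (hc : 0 ≤ c) : ExpSmall fun L i => c * a L i := by
  obtain ⟨κ, C, hκ, hC, h⟩ := ha
  refine ⟨κ, c * C, hκ, mul_nonneg hc hC, fun L i hi => ?_⟩
  rw [mul_assoc]
  exact mul_le_mul_of_nonneg_left (h L i hi) hc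

lemma pow_mul (ha : ExpSmall a) (k : ℕ) : ExpSmall fun L i => (L + 1 : ℝ) ^ k * a L i := by
  obtain ⟨κ, C, hκ, hC, h⟩ := ha
  have half : 0 < κ / 2 := half_pos hκ
  have poly (L : ℕ) : (L + 1 : ℝ) ^ k ≤ k.factorial / (κ / 2) ^ k * Real.exp (κ / 2 * (L + 1)) := by
    have := Real.pow_div_factorial_le_exp (κ / 2 * (L + 1)) (by positivity) k
    rw [mul_pow, div_le_iff₀ (by positivity)] at this
    rw [div_mul_eq_mul_div, le_div_iff₀ (by positivity)]
    linarith
  refine ⟨κ / 2, k.factorial / (κ / 2) ^ k * Real.exp (κ / 2) * C, half, by positivity,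
    fun L i hi => ?_⟩
  calc (L + 1 : ℝ) ^ k * a L i
      ≤ (L + 1 : ℝ) ^ k * (C * Real.exp (-(κ * L))) := by
        gcongr
        exact h L i hi
    _ ≤ k.factorial / (κ / 2) ^ k * Real.exp (κ / 2 * (L + 1)) * (C * Real.exp (-(κ * L))) := by
        gcongr
        exact poly L
    _ = k.factorial / (κ / 2) ^ k * C * Real.exp (κ / 2 * (L + 1) + -(κ * L)) := by
        rw [Real.exp_add]
        ring
    _ = k.factorial / (κ / 2) ^ k * C * Real.exp (κ / 2 + -(κ / 2 * L)) := by ring_nf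
    _ = _ := by
        rw [Real.exp_add]
        ring

lemma tendsto_sum (ha : ExpSmall a) (ha₀ : ∀ L i, 0 ≤ a L i) :
    Tendsto (fun L => ∑ i ∈ Finset.range (L + 1), a L i) atTop (nhds 0) := by
  obtain ⟨κ, C, hκ, -, h⟩ := ha.pow_mul 1
  have decay : Tendsto (fun L : ℕ => C * Real.exp (-(κ * L))) atTop (nhds 0) := by
    simpa using (Real.tendsto_exp_neg_atTop_nhds_zero.comp
      (tendsto_natCast_atTop_atTop.const_mul_atTop hκ)).const_mul C
  refine squeeze_zero (fun L => Finset.sum_nonneg fun i _ => ha₀ L i) (fun L => ?_) decay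
  have each (i) (hi : i ∈ Finset.range (L + 1)) :
      a L i ≤ C * Real.exp (-(κ * L)) / (L + 1) := by
    rw [le_div_iff₀ (by positivity), mul_comm]
    simpa using h L i (Finset.mem_range_succ_iff.1 hi)
  refine (Finset.sum_le_card_nsmul _ _ _ each).trans_eq ?_
  rw [Finset.card_range, nsmul_eq_mul]
  push_cast
  field_simp

end ExpSmall

/-! ### Transfer and Markov operators -/

section Branching

variable {S M : Type*} [Fintype M]

/-- The operator `F ↦ ∑ m, w s m * F (f s m)` of a system on `S` which passes from `s` to `f s m`
with weight `w s m`. It is a transfer operator when `w` counts moves, and a Markov operator when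
`w s` is a probability vector for every `s`. -/
def branchOp (f : S → M → S) (w : S → M → ℝ) : Module.End ℝ (S → ℝ) where
  toFun F s := ∑ m, w s m * F (f s m)
  map_add' F G := by ext s; simp only [Pi.add_apply, mul_add, Finset.sum_add_distrib]
  map_smul' r F := by
    ext s
    simp only [Pi.smul_apply, smul_eq_mul, RingHom.id_apply, Finset.mul_sum, mul_left_comm]

variable {f : S → M → S} {w p : S → M → ℝ}

lemma branchOp_apply (F : S → ℝ) (s : S) : branchOp f w F s = ∑ m, w s m * F (f s m) := rfl

lemma branchOp_pow_succ_apply (n : ℕ) (F : S → ℝ) (s : S) :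
    (branchOp f w ^ (n + 1)) F s = ∑ m, w s m * (branchOp f w ^ n) F (f s m) := by
  rw [pow_succ', Module.End.mul_apply, branchOp_apply]

lemma monotone_branchOp (hw : 0 ≤ w) : Monotone (branchOp f w) := fun _ _ hFG s =>
  Finset.sum_le_sum fun m _ => mul_le_mul_of_nonneg_left (hFG _) (hw s m)

lemma monotone_branchOp_pow (hw : 0 ≤ w) (n : ℕ) : Monotone (branchOp f w ^ n) := by
  simpa only [Module.End.coe_pow] using (monotone_branchOp hw).iterate n

lemma branchOp_pow_indicator_le_add (hw : 0 ≤ w) {A B C : Set S} (h : A ⊆ B ∪ C) (n : ℕ) (s : S) :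
    (branchOp f w ^ n) (A.indicator 1) s ≤
      (branchOp f w ^ n) (B.indicator 1) s + (branchOp f w ^ n) (C.indicator 1) s := by
  classical
  have split : A.indicator (1 : S → ℝ) ≤ B.indicator 1 + C.indicator 1 := by
    intro t
    have mem : t ∈ A → t ∈ B ∨ t ∈ C := @h t
    simp only [Pi.add_apply, indicator_apply, Pi.one_apply]
    split_ifs <;> first | tauto | norm_num
  have iterate := monotone_branchOp_pow (f := f) hw n split s
  rwa [map_add] at iterate

lemma branchOp_pow_nonneg (hw : 0 ≤ w) (n : ℕ) {F : S → ℝ} (hF : 0 ≤ F) :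
    0 ≤ (branchOp f w ^ n) F := by
  simpa only [map_zero] using monotone_branchOp_pow (f := f) hw n hF

lemma branchOp_pow_le_smul (hw : 0 ≤ w) {F : S → ℝ} {r : ℝ} (hr : 0 ≤ r)
    (h : branchOp f w F ≤ r • F) (n : ℕ) : (branchOp f w ^ n) F ≤ r ^ n • F := by
  induction n with
  | zero => simp
  | succ n ih =>
    calc (branchOp f w ^ (n + 1)) F = branchOp f w ((branchOp f w ^ n) F) := by
          rw [pow_succ', Module.End.mul_apply]
      _ ≤ branchOp f w (r ^ n • F) := monotone_branchOp hw ih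
      _ = r ^ n • branchOp f w F := map_smul ..
      _ ≤ r ^ n • r • F := smul_le_smul_of_nonneg_left h (pow_nonneg hr n)
      _ = r ^ (n + 1) • F := by rw [smul_smul, pow_succ]

lemma branchOp_pow_mul_of_conj {h : S → ℝ} {r : ℝ}
    (hconj : ∀ s m, w s m * h (f s m) = r * h s * p s m) (n : ℕ) (F : S → ℝ) :
    (branchOp f w ^ n) (h * F) = r ^ n • (h * (branchOp f p ^ n) F) := by
  induction n with
  | zero => simp
  | succ n ih =>
    ext s
    rw [pow_succ', Module.End.mul_apply, ih, map_smul]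
    simp only [Pi.smul_apply, smul_eq_mul, branchOp_apply, Pi.mul_apply,
      branchOp_pow_succ_apply, Finset.mul_sum]
    refine Finset.sum_congr rfl fun m _ => ?_
    rw [pow_succ]
    linear_combination r ^ n * (branchOp f p ^ n) F (f s m) * hconj s m

/-- The weights `p s m` are the transition probabilities of a Markov chain. -/
structure IsStochastic (p : S → M → ℝ) : Prop where
  nonneg : 0 ≤ p
  sum_eq_one : ∀ s, ∑ m, p s m = 1

namespace IsStochastic

lemma branchOp_pow_one (hp : IsStochastic p) (n : ℕ) : (branchOp f p ^ n) 1 = 1 := by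
  have invariant : branchOp f p 1 = 1 := by
    ext s
    simp only [branchOp_apply, Pi.one_apply, mul_one, hp.sum_eq_one]
  rw [Module.End.coe_pow, Function.iterate_fixed invariant]

lemma branchOp_pow_le_add (hp : IsStochastic p) {V : S → ℝ} {b : ℝ}
    (hV : ∀ s, branchOp f p V s ≤ V s + b) (n : ℕ) (s : S) :
    (branchOp f p ^ n) V s ≤ V s + n * b := by
  induction n generalizing s with
  | zero => simp
  | succ n ih =>
    calc (branchOp f p ^ (n + 1)) V s
        ≤ ∑ m, p s m * (V (f s m) + n * b) := by
          rw [branchOp_pow_succ_apply]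
          exact Finset.sum_le_sum fun m _ => mul_le_mul_of_nonneg_left (ih _) (hp.nonneg s m)
      _ = branchOp f p V s + n * b := by
          simp only [mul_add, Finset.sum_add_distrib, ← Finset.sum_mul, hp.sum_eq_one, one_mul,
            branchOp_apply]
      _ ≤ V s + (n + 1 : ℕ) * b := by
          push_cast
          linarith [hV s]

end IsStochastic

lemma exp_le_one_add_add_sq {u : ℝ} (hu : |u| ≤ 1) : Real.exp u ≤ 1 + u + u ^ 2 := by
  linarith [(abs_le.1 (Real.abs_exp_sub_one_sub_id_le hu)).2]

namespace IsStochastic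

variable {G : S → ℝ} {c K θ : ℝ}

lemma branchOp_exp_le (hp : IsStochastic p) (hG : ∀ s, branchOp f p G s = G s + c)
    (hK : ∀ s m, |G (f s m) - G s| ≤ K) (hθ : |θ| * K ≤ 1) :
    branchOp f p (fun s => Real.exp (θ * G s)) ≤
      Real.exp (θ * c + θ ^ 2 * K ^ 2) • fun s => Real.exp (θ * G s) := by
  intro s
  have drift : ∑ m, p s m * (G (f s m) - G s) = c := by
    simp only [mul_sub, Finset.sum_sub_distrib, ← Finset.sum_mul, hp.sum_eq_one, one_mul]
    linarith [hG s, branchOp_apply (f := f) (w := p) G s]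
  have factor (m : M) : Real.exp (θ * G (f s m)) ≤
      Real.exp (θ * G s) * (1 + θ * (G (f s m) - G s) + θ ^ 2 * K ^ 2) := by
    have small : |θ * (G (f s m) - G s)| ≤ 1 := by
      rw [abs_mul]
      exact (mul_le_mul_of_nonneg_left (hK s m) (abs_nonneg θ)).trans hθ
    calc Real.exp (θ * G (f s m))
        = Real.exp (θ * G s) * Real.exp (θ * (G (f s m) - G s)) := by
          rw [← Real.exp_add]
          ring_nf
      _ ≤ _ := by
          have square : (G (f s m) - G s) ^ 2 ≤ K ^ 2 := sq_le_sq' (abs_le.1 (hK s m)).1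
            (abs_le.1 (hK s m)).2
          gcongr
          nlinarith [exp_le_one_add_add_sq small, mul_le_mul_of_nonneg_left square (sq_nonneg θ)]
  calc branchOp f p (fun s => Real.exp (θ * G s)) s
      ≤ ∑ m, p s m * (Real.exp (θ * G s) * (1 + θ * (G (f s m) - G s) + θ ^ 2 * K ^ 2)) :=
        Finset.sum_le_sum fun m _ => mul_le_mul_of_nonneg_left (factor m) (hp.nonneg s m)
    _ = Real.exp (θ * G s) * ((∑ m, p s m) * (1 + θ ^ 2 * K ^ 2) +
          θ * ∑ m, p s m * (G (f s m) - G s)) := by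
        simp only [Finset.mul_sum, Finset.sum_mul, ← Finset.sum_add_distrib]
        exact Finset.sum_congr rfl fun m _ => by ring
    _ = Real.exp (θ * G s) * (θ * c + θ ^ 2 * K ^ 2 + 1) := by
        rw [hp.sum_eq_one, drift]
        ring
    _ ≤ Real.exp (θ * G s) * Real.exp (θ * c + θ ^ 2 * K ^ 2) := by
        gcongr
        exact Real.add_one_le_exp _
    _ = _ := mul_comm _ _

lemma branchOp_pow_one_sided_tail_le (hp : IsStochastic p) (hG : ∀ s, branchOp f p G s = G s + c)
    (hK : ∀ s m, |G (f s m) - G s| ≤ K) (hθ : |θ| * K ≤ 1) (n : ℕ) (a : ℝ) (s : S) :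
    (branchOp f p ^ n) ({t | a < θ * (G t - c * n)}.indicator 1) s ≤
      Real.exp (|θ| * |G s| + n * (θ ^ 2 * K ^ 2) - a) := by
  have markov : {t | a < θ * (G t - c * n)}.indicator (1 : S → ℝ) ≤
      Real.exp (-(θ * c * n) - a) • fun t => Real.exp (θ * G t) := by
    refine indicator_le' (fun t ht => ?_) fun t _ => ?_
    · simp only [Pi.smul_apply, smul_eq_mul, Pi.one_apply, ← Real.exp_add]
      exact Real.one_le_exp (by rw [mem_ofPred_eq] at ht; linarith)
    · exact mul_nonneg (Real.exp_nonneg _) (Real.exp_nonneg _)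
  calc (branchOp f p ^ n) ({t | a < θ * (G t - c * n)}.indicator 1) s
      ≤ Real.exp (-(θ * c * n) - a) * (branchOp f p ^ n) (fun t => Real.exp (θ * G t)) s := by
        have iterate := monotone_branchOp_pow (f := f) hp.nonneg n markov s
        rwa [map_smul] at iterate
    _ ≤ Real.exp (-(θ * c * n) - a) *
          (Real.exp (θ * c + θ ^ 2 * K ^ 2) ^ n * Real.exp (θ * G s)) := by
        gcongr
        exact branchOp_pow_le_smul hp.nonneg (Real.exp_nonneg _) (hp.branchOp_exp_le hG hK hθ) n s
    _ = Real.exp (θ * G s + n * (θ ^ 2 * K ^ 2) - a) := by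
        rw [← Real.exp_nat_mul, ← Real.exp_add, ← Real.exp_add]
        ring_nf
    _ ≤ _ := by
        have := (le_abs_self (θ * G s)).trans_eq (abs_mul θ (G s))
        gcongr

lemma branchOp_pow_tail_le (hp : IsStochastic p) (hG : ∀ s, branchOp f p G s = G s + c)
    (hK : ∀ s m, |G (f s m) - G s| ≤ K) (hθ₀ : 0 < θ) (hθ : θ * K ≤ 1) (n : ℕ) (a : ℝ) (s : S) :
    (branchOp f p ^ n) ({t | a < |G t - c * n|}.indicator 1) s ≤
      2 * Real.exp (θ * |G s| + n * (θ ^ 2 * K ^ 2) - θ * a) := by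
  have split : {t | a < |G t - c * n|} ⊆
      {t | θ * a < θ * (G t - c * n)} ∪ {t | θ * a < -θ * (G t - c * n)} := by
    rintro t (ht : a < |G t - c * n|)
    rcases lt_abs.1 ht with ht | ht
    · exact .inl (mul_lt_mul_of_pos_left ht hθ₀)
    · exact .inr (by rw [mem_ofPred_eq, neg_mul_comm]; exact mul_lt_mul_of_pos_left ht hθ₀)
  have tails := branchOp_pow_indicator_le_add (f := f) hp.nonneg split n s
  have upper := hp.branchOp_pow_one_sided_tail_le hG hK (θ := θ)
    (by rwa [abs_of_pos hθ₀]) n (θ * a) s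
  have lower := hp.branchOp_pow_one_sided_tail_le hG hK (θ := -θ)
    (by rwa [abs_neg, abs_of_pos hθ₀]) n (θ * a) s
  rw [abs_neg, neg_sq] at lower
  rw [abs_of_pos hθ₀] at upper lower
  exact tails.trans ((add_le_add upper lower).trans_eq (two_mul _).symm)

lemma expSmall_tail (hp : IsStochastic p) (hG : ∀ s, branchOp f p G s = G s + c) (hK₀ : 0 < K)
    (hK : ∀ s m, |G (f s m) - G s| ≤ K) {δ : ℝ} (hδ : 0 < δ) (s : S) :
    ExpSmall fun L i => (branchOp f p ^ i) ({t | δ * L < |G t - c * i|}.indicator 1) s := by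
  set θ := min (1 / K) (δ / (2 * K ^ 2))
  have pos : 0 < θ := lt_min (by positivity) (by positivity)
  have small : θ * K ≤ 1 := (le_div_iff₀ hK₀).1 (min_le_left ..)
  have quad : θ ^ 2 * K ^ 2 ≤ θ * δ / 2 := by
    have := (le_div_iff₀ (by positivity)).1 (min_le_right (1 / K) (δ / (2 * K ^ 2)))
    nlinarith
  refine ⟨θ * δ / 2, 2 * Real.exp (θ * |G s|), by positivity, by positivity, fun L i hi => ?_⟩
  refine (hp.branchOp_pow_tail_le hG hK pos small i _ s).trans ?_
  rw [mul_assoc, ← Real.exp_add]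
  gcongr
  have : (i : ℝ) * (θ ^ 2 * K ^ 2) ≤ L * (θ * δ / 2) := by gcongr
  linarith

lemma branchOp_pow_indicator_le_of_drift (hp : IsStochastic p) {V : S → ℝ} {b a : ℝ} {A : Set S}
    (hV : ∀ s, branchOp f p V s ≤ V s + b) (hV₀ : 0 ≤ V) (ha : 0 < a) (hA : ∀ s ∈ A, a ≤ V s)
    (n : ℕ) (s : S) : (branchOp f p ^ n) (A.indicator 1) s ≤ a⁻¹ * (V s + n * b) := by
  have markov : A.indicator 1 ≤ a⁻¹ • V := by
    refine indicator_le' (fun t ht => ?_) fun t _ => ?_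
    · rw [Pi.smul_apply, smul_eq_mul, Pi.one_apply, inv_mul_eq_div, one_le_div ha]
      exact hA t ht
    · exact mul_nonneg (inv_nonneg.2 ha.le) (hV₀ t)
  have iterate := monotone_branchOp_pow (f := f) hp.nonneg n markov s
  rw [map_smul] at iterate
  exact iterate.trans (mul_le_mul_of_nonneg_left (hp.branchOp_pow_le_add hV n s)
    (inv_nonneg.2 ha.le))

lemma expSmall_tail_of_drift (hp : IsStochastic p) {V D : S → ℝ} {b β δ : ℝ}
    (hV : ∀ s, branchOp f p V s ≤ V s + b) (hb : 0 ≤ b) (hβ : 0 < β)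
    (hDV : ∀ s, Real.exp (β * D s) ≤ V s) (hδ : 0 < δ) (s : S) :
    ExpSmall fun L i => (branchOp f p ^ i) ({t | δ * L < D t}.indicator 1) s := by
  have hV₀ : 0 ≤ V := fun t => (Real.exp_nonneg _).trans (hDV t)
  have decay : ExpSmall fun L _ => Real.exp (-(β * δ * L)) :=
    ⟨β * δ, 1, by positivity, zero_le_one, fun L i _ => (one_mul _).ge⟩
  refine ((decay.pow_mul 1).const_mul (add_nonneg (hV₀ s) hb)).mono fun L i hi => ?_
  have tail := hp.branchOp_pow_indicator_le_of_drift hV hV₀ (Real.exp_pos (β * (δ * L)))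
    (A := {t | δ * L < D t}) (fun t ht => (Real.exp_le_exp.2
      (mul_le_mul_of_nonneg_left (le_of_lt ht) hβ.le)).trans (hDV t)) i s
  rw [← Real.exp_neg, ← mul_assoc β] at tail
  refine tail.trans ?_
  rw [pow_one, ← mul_assoc, mul_comm]
  gcongr
  have : (i : ℝ) ≤ L := by exact_mod_cast hi
  nlinarith [hV₀ s, show (0 : ℝ) ≤ L from L.cast_nonneg, show 0 ≤ V s from hV₀ s]

end IsStochastic

end Branching

/-! ### Two-sided walks as an automaton -/

section Automaton

/-- The behaviour of the walk since it last reached a new extremal line: it stands on the first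
point of that line, or it moves along the line towards or away from the top-right corner. -/
inductive WalkPhase
  | fresh
  | toward
  | away

/-- A step relative to the side of the bounding box on which the walk stands: out of the box, or
along the side, towards or away from the top-right corner. -/
inductive WalkMove
  | out
  | toward
  | away
  deriving DecidableEq

instance : Fintype WalkMove where
  elems := {.out, .toward, .away}
  complete m := by cases m <;> simp

lemma sum_walkMove (F : WalkMove → ℝ) : ∑ m, F m = F .out + F .toward + F .away := by
  rw [add_assoc]
  exact (Finset.sum_insert (by decide)).trans
    (congrArg _ (Finset.sum_pair (by decide)))

/-- The direction of a move of a walk standing on the right side of its bounding box. -/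
def WalkMove.dir : WalkMove → ℤ × ℤ
  | .out => (1, 0)
  | .toward => (0, 1)
  | .away => (0, -1)

lemma WalkMove.dir_ne_zero (m : WalkMove) : m.dir ≠ 0 := by
  cases m <;> decide

/-- The moves which do not point to a site of the current extremal line. -/
def WalkPhase.moves : WalkPhase → Finset WalkMove
  | .fresh => {.out, .toward, .away}
  | .toward => {.out, .toward}
  | .away => {.out, .away}

/-- The isometries carrying the right side (`true`) to the right side or (`false`) to the top side
of a bounding box. -/
def sideFrame : Bool → ℤ × ℤ ≃+ ℤ × ℤ
  | true => AddEquiv.refl _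
  | false => AddEquiv.prodComm

lemma sideFrame_not (b : Bool) (p : ℤ × ℤ) : sideFrame (!b) p = sideFrame b p.swap := by
  cases b <;> rfl

lemma isStep_sideFrame_iff (b : Bool) (v : ℤ × ℤ) : IsStep (sideFrame b v) ↔ IsStep v := by
  cases b
  · simp only [IsStep, sideFrame, AddEquiv.coe_prodComm, Prod.ext_iff, Prod.fst_swap, Prod.snd_swap]
    tauto
  · rfl

lemma sideFrame_le_sideFrame_iff (b : Bool) {p q : ℤ × ℤ} :
    sideFrame b p ≤ sideFrame b q ↔ p ≤ q := by
  cases b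
  · exact Prod.swap_le_swap
  · rfl

/-- The half-line starting at `p` in direction `v` does not meet `S`, except possibly at `p`. -/
def RayFree (S : Set (ℤ × ℤ)) (p v : ℤ × ℤ) : Prop :=
  ∀ k : ℕ, 1 ≤ k → p + (k : ℤ) • v ∉ S

lemma rayFree_preimage_iff (e : ℤ × ℤ ≃+ ℤ × ℤ) {S : Set (ℤ × ℤ)} {p v : ℤ × ℤ} :
    RayFree (e ⁻¹' S) p v ↔ RayFree S (e p) (e v) := by
  simp only [RayFree, mem_preimage, map_add, map_zsmul]

/-- `(x, y)` is the top-right corner of the bounding box of `S`, and each row and column below the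
corner meets `S`. For the trace of a two-sided walk the quadrant `Iic 0` is part of `S`. -/
structure IsBoxCorner (S : Set (ℤ × ℤ)) (x y : ℤ) : Prop where
  mem_upperBounds : (x, y) ∈ upperBounds S
  row : ∀ b ≤ y, ∃ a, (a, b) ∈ S
  col : ∀ a ≤ x, ∃ b, (a, b) ∈ S

/-- `S` is a possible trace of a walk which stands on the right side of its box of corner `(x, y)`,
at distance `d` below the corner, in phase `φ`. -/
structure IsTrace (S : Set (ℤ × ℤ)) (x y : ℤ) (d : ℕ) (φ : WalkPhase) : Prop where
  mem_upperBounds : (x, y) ∈ upperBounds S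
  inner_row : ∀ b ≤ y, ∃ a < x, (a, b) ∈ S
  col : ∀ a ≤ x, ∃ b, (a, b) ∈ S
  mem : (x, y - d) ∈ S
  mem_moves_iff : ∀ m, m ∈ φ.moves ↔ RayFree S (x, y - d) m.dir

variable {S : Set (ℤ × ℤ)} {x y : ℤ} {d : ℕ} {φ : WalkPhase}

lemma IsBoxCorner.swap (h : IsBoxCorner S x y) : IsBoxCorner (Prod.swap ⁻¹' S) y x where
  mem_upperBounds _ hp := ⟨(h.mem_upperBounds hp).2, (h.mem_upperBounds hp).1⟩
  row := h.col
  col := h.row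

lemma IsTrace.isBoxCorner (h : IsTrace S x y d φ) : IsBoxCorner S x y where
  mem_upperBounds := h.mem_upperBounds
  row b hb := (h.inner_row b hb).imp fun _ ha => ha.2
  col := h.col

lemma rayFree_insert_next {p v : ℤ × ℤ} (hv : v ≠ 0) (h : RayFree S p v) :
    RayFree (insert (p + v) S) (p + v) v := by
  rintro k hk (heq | hmem)
  · rw [add_eq_left, smul_eq_zero] at heq
    exact heq.elim (by omega) hv
  · refine h (k + 1) (by omega) ?_
    convert hmem using 1
    push_cast
    module

lemma IsBoxCorner.isTrace_insert (h : IsBoxCorner S x y) (d : ℕ) :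
    IsTrace (insert (x + 1, y - d) S) (x + 1) y d .fresh where
  mem_upperBounds := by
    rintro p (rfl | hp)
    · exact ⟨le_rfl, by simp⟩
    · exact (h.mem_upperBounds hp).trans ⟨by simp, le_rfl⟩
  inner_row b hb := by
    obtain ⟨a, ha⟩ := h.row b hb
    exact ⟨a, Int.lt_add_one_iff.2 (h.mem_upperBounds ha).1, .inr ha⟩
  col a ha := by
    rcases ha.lt_or_eq with ha | rfl
    · exact (h.col a (Int.lt_add_one_iff.1 ha)).imp fun _ hb => .inr hb
    · exact ⟨_, .inl rfl⟩
  mem := .inl rfl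
  mem_moves_iff m := by
    refine iff_of_true (by cases m <;> decide) ?_
    rintro k hk (heq | hmem)
    · rw [add_eq_left, smul_eq_zero] at heq
      exact heq.elim (by omega) m.dir_ne_zero
    · have forward : 0 ≤ (k : ℤ) * m.dir.1 := mul_nonneg (by omega) (by cases m <;> decide)
      have bounded : x + 1 + (k : ℤ) * m.dir.1 ≤ x := (h.mem_upperBounds hmem).1
      omega

namespace IsTrace

lemma insert_site (h : IsTrace S x y d φ) {d' : ℕ} {φ' : WalkPhase}
    (hm : ∀ m, m ∈ φ'.moves ↔ RayFree (insert (x, y - d') S) (x, y - d') m.dir) :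
    IsTrace (insert (x, y - d') S) x y d' φ' where
  mem_upperBounds := by
    rw [upperBounds_insert]
    exact ⟨⟨le_rfl, by simp⟩, h.mem_upperBounds⟩
  inner_row b hb := (h.inner_row b hb).imp fun _ ha => ⟨ha.1, .inr ha.2⟩
  col a ha := (h.col a ha).imp fun _ hb => .inr hb
  mem := .inl rfl
  mem_moves_iff := hm

lemma rayFree_insert_out (h : IsTrace S x y d φ) (b : ℤ) :
    RayFree (insert (x, b) S) (x, b) WalkMove.out.dir := by
  rintro k hk (heq | hmem)
  · rw [add_eq_left, smul_eq_zero] at heq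
    exact heq.elim (by omega) WalkMove.out.dir_ne_zero
  · have bounded : x + (k : ℤ) * 1 ≤ x := (h.mem_upperBounds hmem).1
    omega

lemma toward (h : IsTrace S x y (d + 1) φ) (hm : .toward ∈ φ.moves) :
    IsTrace (insert (x, y - d) S) x y d .toward := by
  have next : (x, y - d) = (x, y - (d + 1 : ℕ)) + WalkMove.toward.dir := by
    simp only [WalkMove.dir, Prod.mk_add_mk, Prod.mk.injEq]
    omega
  refine h.insert_site fun
    | .out => iff_of_true (by decide) (h.rayFree_insert_out _)
    | .toward => iff_of_true (by decide) ?_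
    | .away => iff_of_false (by decide) fun hfree => hfree 1 le_rfl (.inr ?_)
  · rw [next]
    exact rayFree_insert_next (WalkMove.dir_ne_zero _) ((h.mem_moves_iff _).1 hm)
  · convert h.mem using 1
    simp only [WalkMove.dir, Prod.smul_mk, Prod.mk_add_mk, smul_eq_mul]
    push_cast
    ring_nf

lemma away (h : IsTrace S x y d φ) (hm : .away ∈ φ.moves) :
    IsTrace (insert (x, y - (d + 1 : ℕ)) S) x y (d + 1) .away := by
  have next : (x, y - (d + 1 : ℕ)) = (x, y - d) + WalkMove.away.dir := by
    simp only [WalkMove.dir, Prod.mk_add_mk, Prod.mk.injEq]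
    omega
  refine h.insert_site fun
    | .out => iff_of_true (by decide) (h.rayFree_insert_out _)
    | .toward => iff_of_false (by decide) fun hfree => hfree 1 le_rfl (.inr ?_)
    | .away => iff_of_true (by decide) ?_
  · convert h.mem using 1
    simp only [WalkMove.dir, Prod.smul_mk, Prod.mk_add_mk, smul_eq_mul]
    push_cast
    ring_nf
  · rw [next]
    exact rayFree_insert_next (WalkMove.dir_ne_zero _) ((h.mem_moves_iff _).1 hm)

lemma isStep_and_rayFree_iff (h : IsTrace S x y d φ) (v : ℤ × ℤ) :
    IsStep v ∧ RayFree S (x, y - d) v ↔ ∃ m ∈ φ.moves, m.dir = v := by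
  constructor
  · rintro ⟨rfl | rfl | rfl | rfl, hfree⟩
    · exact ⟨.out, (h.mem_moves_iff _).2 hfree, rfl⟩
    · obtain ⟨a, ha, hmem⟩ := h.inner_row (y - d) (by omega)
      refine absurd ?_ (hfree (x - a).toNat (by omega))
      rw [Int.toNat_of_nonneg (by omega)]
      simpa using hmem
    · exact ⟨.toward, (h.mem_moves_iff _).2 hfree, rfl⟩
    · exact ⟨.away, (h.mem_moves_iff _).2 hfree, rfl⟩
  · rintro ⟨m, hm, rfl⟩
    exact ⟨by cases m <;> simp [IsStep, WalkMove.dir], (h.mem_moves_iff m).1 hm⟩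

end IsTrace

/-- The state of a two-sided walk: the side (right for `true`, top for `false`) of its bounding box
on which it stands, the top-right corner `(x, y)` of the box, its distance `depth` to the corner and
its phase. The coordinates are those of `sideFrame side`, in which the side is the right one. -/
structure WalkState where
  side : Bool
  x : ℤ
  y : ℤ
  depth : ℕ
  phase : WalkPhase

namespace WalkState

/-- The site occupied by the walk. -/
def pos (s : WalkState) : ℤ × ℤ := sideFrame s.side (s.x, s.y - s.depth)

/-- The state after a move. From the corner, the move towards the corner leaves the box through the
other side. -/
def step : WalkState → WalkMove → WalkState
  | ⟨b, x, y, d, _⟩, .out => ⟨b, x + 1, y, d, .fresh⟩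
  | ⟨b, x, y, 0, _⟩, .toward => ⟨!b, y + 1, x, 0, .fresh⟩
  | ⟨b, x, y, d + 1, _⟩, .toward => ⟨b, x, y, d, .toward⟩
  | ⟨b, x, y, d, _⟩, .away => ⟨b, x, y, d + 1, .away⟩

lemma pos_step (s : WalkState) (m : WalkMove) :
    (s.step m).pos = s.pos + sideFrame s.side m.dir := by
  obtain ⟨b, x, y, d, φ⟩ := s
  rcases m with _ | _ | _ <;> rcases d with _ | d <;>
    simp only [step, pos, sideFrame_not, ← map_add, WalkMove.dir, Prod.swap_prod_mk,
      Prod.mk_add_mk] <;> push_cast <;> ring_nf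

lemma pos_step_injective (s : WalkState) : Function.Injective fun m => (s.step m).pos := by
  intro m m' h
  simp only [pos_step, add_right_inj, EmbeddingLike.apply_eq_iff_eq] at h
  cases m <;> cases m' <;> first | rfl | exact absurd h (by decide)

/-- A walk in state `s` may have visited exactly the sites of `S`. -/
def Fits (s : WalkState) (S : Set (ℤ × ℤ)) : Prop :=
  IsTrace (sideFrame s.side ⁻¹' S) s.x s.y s.depth s.phase

variable {s : WalkState}

lemma Fits.pos_mem (h : s.Fits S) : s.pos ∈ S := IsTrace.mem h

lemma Fits.step (h : s.Fits S) {m : WalkMove} (hm : m ∈ s.phase.moves) :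
    (s.step m).Fits (insert (s.step m).pos S) := by
  have preimage (b : Bool) (p : ℤ × ℤ) :
      sideFrame b ⁻¹' insert (sideFrame b p) S = insert p (sideFrame b ⁻¹' S) := by
    ext q
    simp only [mem_preimage, mem_insert_iff, EmbeddingLike.apply_eq_iff_eq]
  obtain ⟨b, x, y, d, φ⟩ := s
  match m, d with
  | .out, d =>
    simpa only [Fits, pos, WalkState.step, preimage] using (IsTrace.isBoxCorner h).isTrace_insert d
  | .toward, 0 =>
    have swapped : Prod.swap ⁻¹' (sideFrame b ⁻¹' S) = sideFrame (!b) ⁻¹' S := by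
      ext p
      rw [mem_preimage, mem_preimage, ← sideFrame_not, mem_preimage]
    simpa only [Fits, pos, WalkState.step, preimage, swapped] using
      (IsTrace.isBoxCorner h).swap.isTrace_insert 0
  | .toward, d + 1 => simpa only [Fits, pos, WalkState.step, preimage] using IsTrace.toward h hm
  | .away, d => simpa only [Fits, pos, WalkState.step, preimage] using IsTrace.away h hm

lemma Fits.isStep_and_rayFree_iff (h : s.Fits S) (q : ℤ × ℤ) :
    IsStep (q - s.pos) ∧ RayFree S s.pos (q - s.pos) ↔
      ∃ m ∈ s.phase.moves, (s.step m).pos = q := by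
  obtain ⟨v, hv⟩ := (sideFrame s.side).surjective (q - s.pos)
  rw [← hv, isStep_sideFrame_iff]
  refine (and_congr_right' (rayFree_preimage_iff _).symm).trans
    ((IsTrace.isStep_and_rayFree_iff h v).trans ?_)
  refine exists_congr fun m => and_congr_right' ?_
  rw [pos_step, ← eq_sub_iff_add_eq', ← hv, EmbeddingLike.apply_eq_iff_eq]

lemma Fits.pos_mem_upperBounds_iff (h : s.Fits S) : s.pos ∈ upperBounds S ↔ s.depth = 0 := by
  have framed : s.pos ∈ upperBounds S ↔
      (s.x, s.y - s.depth) ∈ upperBounds (sideFrame s.side ⁻¹' S) := by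
    rw [mem_upperBounds, (sideFrame s.side).surjective.forall]
    exact forall₂_congr fun _ _ => sideFrame_le_sideFrame_iff _
  rw [framed]
  constructor
  · intro hub
    obtain ⟨a, -, ha⟩ := h.inner_row s.y le_rfl
    have := (hub ha).2
    simp only at this
    omega
  · intro hd
    simpa [hd] using h.mem_upperBounds

end WalkState

/-- `π` continues prudently a path with trace `S`. -/
def PrudentAfter (S : Set (ℤ × ℤ)) {n : ℕ} (π : Fin (n + 1) → ℤ × ℤ) : Prop :=
  ∀ i : Fin n, IsStep (π i.succ - π i.castSucc) ∧
    RayFree (S ∪ π '' Iic i.castSucc) (π i.castSucc) (π i.succ - π i.castSucc)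

lemma prudentAfter_cons_iff {n : ℕ} {p : ℤ × ℤ} (hp : p ∈ S) {π : Fin (n + 1) → ℤ × ℤ} :
    PrudentAfter S (Fin.cons p π : Fin (n + 2) → ℤ × ℤ) ↔
      (IsStep (π 0 - p) ∧ RayFree S p (π 0 - p)) ∧ PrudentAfter (insert (π 0) S) π := by
  have start : S ∪ (Fin.cons p π : Fin (n + 2) → ℤ × ℤ) '' Iic 0 = S := by
    rw [union_eq_left]
    rintro _ ⟨i, hi, rfl⟩
    rwa [Fin.le_zero_iff.1 hi, Fin.cons_zero]
  have later (i : Fin n) : S ∪ (Fin.cons p π : Fin (n + 2) → ℤ × ℤ) '' Iic i.castSucc.succ =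
      insert (π 0) S ∪ π '' Iic i.castSucc := by
    ext q
    simp only [mem_union, mem_image, mem_Iic, Fin.exists_fin_succ (n := n + 1), Fin.cons_zero,
      Fin.cons_succ, Fin.succ_le_succ_iff, Fin.zero_le, true_and, mem_insert_iff]
    constructor
    · rintro (hq | rfl | hq)
      exacts [.inl (.inr hq), .inl (.inr hp), .inr hq]
    · rintro ((rfl | hq) | hq)
      exacts [.inr (.inr ⟨0, Fin.zero_le _, rfl⟩), .inl hq, .inr (.inr hq)]
  simp only [PrudentAfter, Fin.forall_fin_succ (n := n), Fin.castSucc_zero, Fin.cons_zero,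
    Fin.cons_succ, start, ← Fin.succ_castSucc, later]

namespace WalkState

/-- The positions of the walk, starting from state `s`, along all admissible sequences of `n` moves
ending at the corner of the bounding box. -/
def cornerPaths : (n : ℕ) → WalkState → Finset (Fin (n + 1) → ℤ × ℤ)
  | 0, s => if s.depth = 0 then {fun _ => s.pos} else ∅
  | n + 1, s => s.phase.moves.biUnion fun m => (cornerPaths n (s.step m)).image (Fin.cons s.pos)

variable {s : WalkState} {n : ℕ}

lemma cons_mem_cornerPaths_iff {p : ℤ × ℤ} {π : Fin (n + 1) → ℤ × ℤ} :
    Fin.cons p π ∈ s.cornerPaths (n + 1) ↔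
      p = s.pos ∧ ∃ m ∈ s.phase.moves, π ∈ (s.step m).cornerPaths n := by
  simp only [cornerPaths, Finset.mem_biUnion, Finset.mem_image, Fin.cons_inj]
  constructor
  · rintro ⟨m, hm, τ, hτ, rfl, rfl⟩
    exact ⟨rfl, m, hm, hτ⟩
  · rintro ⟨rfl, m, hm, hπ⟩
    exact ⟨m, hm, π, hπ, rfl, rfl⟩

lemma Fits.mem_cornerPaths_iff (h : s.Fits S) {π : Fin (n + 1) → ℤ × ℤ} :
    π ∈ s.cornerPaths n ↔
      π 0 = s.pos ∧ PrudentAfter S π ∧ π (Fin.last n) ∈ upperBounds (S ∪ range π) := by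
  induction n generalizing s S with
  | zero =>
    have single : π = (fun _ => s.pos) ↔ π 0 = s.pos := by
      rw [funext_iff, Fin.forall_fin_one]
    have visited (h0 : π 0 = s.pos) : S ∪ range π = S := by
      rw [union_eq_left]
      rintro _ ⟨i, rfl⟩
      rw [Fin.fin_one_eq_zero i, h0]
      exact h.pos_mem
    rw [cornerPaths, apply_ite (π ∈ ·), Finset.mem_singleton, single]
    simp only [Finset.notMem_empty, if_false_right]
    rw [and_comm]
    refine and_congr_right fun h0 => ?_
    rw [visited h0, ← h.pos_mem_upperBounds_iff, ← h0]
    exact (and_iff_right (fun i => i.elim0)).symm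
  | succ n ih =>
    obtain ⟨p, τ, rfl⟩ : ∃ p τ, π = Fin.cons p τ := ⟨_, _, (Fin.cons_self_tail π).symm⟩
    rw [cons_mem_cornerPaths_iff, Fin.cons_zero]
    refine and_congr_right fun hp => ?_
    subst hp
    have trace : S ∪ range (Fin.cons s.pos τ : Fin (n + 2) → ℤ × ℤ) =
        insert (τ 0) S ∪ range τ := by
      rw [Fin.range_cons, union_insert, insert_eq_of_mem (.inl h.pos_mem), insert_union,
        insert_eq_of_mem (.inr (mem_range_self 0))]
    rw [prudentAfter_cons_iff h.pos_mem, h.isStep_and_rayFree_iff, trace, ← Fin.succ_last,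
      Fin.cons_succ, and_assoc, ← exists_and_right]
    refine exists_congr fun m => ?_
    rw [and_assoc]
    refine and_congr_right fun hm => ?_
    rw [ih (h.step hm)]
    constructor
    · rintro ⟨hτ, hrest⟩
      exact ⟨hτ.symm, hτ ▸ hrest⟩
    · rintro ⟨hτ, hrest⟩
      exact ⟨hτ.symm, hτ ▸ hrest⟩

/-- The state of the walk before its first step. The phase encodes that sites to the south of the
starting point belong to the forbidden quadrant. -/
def origin : WalkState := ⟨true, 0, 0, 0, .toward⟩

lemma origin_fits : origin.Fits (Iic 0) where
  mem_upperBounds _ hp := hp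
  inner_row b hb := ⟨-1, by decide, (by decide : (-1 : ℤ) ≤ 0), hb⟩
  col a ha := ⟨0, ha, le_rfl⟩
  mem := ⟨le_rfl, le_rfl⟩
  mem_moves_iff
    | .out => iff_of_true (by decide) fun k hk hmem => by
      have : 0 + (k : ℤ) * 1 ≤ 0 := hmem.1
      omega
    | .toward => iff_of_true (by decide) fun k hk hmem => by
      have : 0 - 0 + (k : ℤ) * 1 ≤ 0 := hmem.2
      omega
    | .away => iff_of_false (by decide) fun hfree =>
      hfree 1 le_rfl ⟨by decide, by decide⟩

end WalkState

lemma mem_twoSidedSet_iff {L : ℕ} {π : Fin (L + 1) → ℤ × ℤ} :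
    π ∈ twoSidedSet L ↔
      π ∈ WalkState.origin.cornerPaths L ∧ ∀ h : 0 < L, π ⟨1, by omega⟩ = (1, 0) := by
  rw [WalkState.origin_fits.mem_cornerPaths_iff]
  constructor
  · rintro ⟨⟨h0, hprudent⟩, hquadrant, hcorner, hfirst⟩
    refine ⟨⟨h0, fun i => ⟨(hprudent i).1, ?_⟩, ?_⟩, hfirst⟩
    · rintro k hk (hmem | ⟨j, hj, heq⟩)
      · exact hquadrant i k hk hmem
      · exact (hprudent i).2 k hk j hj heq.symm
    · rintro _ (hq | ⟨j, rfl⟩)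
      · exact le_trans hq (le_of_eq_of_le h0.symm (hcorner 0))
      · exact hcorner j
  · rintro ⟨⟨h0, hprudent, hcorner⟩, hfirst⟩
    refine ⟨⟨h0, fun i => ⟨(hprudent i).1, fun k hk j hj heq => ?_⟩⟩, fun i k hk hmem => ?_,
      fun i => hcorner (.inr ⟨i, rfl⟩), hfirst⟩
    · exact (hprudent i).2 k hk (.inr ⟨j, hj, heq.symm⟩)
    · exact (hprudent i).2 k hk (.inl hmem)

namespace WalkState

variable {s : WalkState} {n : ℕ}

lemma apply_zero_of_mem_cornerPaths {π : Fin (n + 1) → ℤ × ℤ} (hπ : π ∈ s.cornerPaths n) :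
    π 0 = s.pos := by
  cases n with
  | zero =>
    rw [cornerPaths] at hπ
    split_ifs at hπ
    · rw [Finset.mem_singleton.1 hπ]
    · exact absurd hπ (Finset.notMem_empty π)
  | succ n =>
    rw [← Fin.cons_self_tail π, cons_mem_cornerPaths_iff] at hπ
    exact hπ.1

/-- The operator which sums a function over the admissible moves. -/
def transfer : Module.End ℝ (WalkState → ℝ) :=
  branchOp step fun s m => if m ∈ s.phase.moves then 1 else 0

/-- The indicator function of the states in which the walk is at the corner of its box. -/
noncomputable def atCorner : WalkState → ℝ := {s | s.depth = 0}.indicator 1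

open scoped Classical in
lemma card_filter_cornerPaths_succ (P : (Fin (n + 2) → ℤ × ℤ) → Prop) :
    ((s.cornerPaths (n + 1)).filter P).card = ∑ m ∈ s.phase.moves,
      (((s.step m).cornerPaths n).filter fun π => P (Fin.cons s.pos π)).card := by
  have disjoint : (s.phase.moves : Set WalkMove).PairwiseDisjoint fun m =>
      ((s.step m).cornerPaths n).image (Fin.cons s.pos : _ → Fin (n + 2) → ℤ × ℤ) := by
    intro m _ m' _ hne
    refine Finset.disjoint_left.2 fun π hπ hπ' => hne (s.pos_step_injective ?_)
    obtain ⟨τ, hτ, rfl⟩ := Finset.mem_image.1 hπ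
    obtain ⟨τ', hτ', heq⟩ := Finset.mem_image.1 hπ'
    rw [Fin.cons_right_injective _ heq] at hτ'
    exact (apply_zero_of_mem_cornerPaths hτ).symm.trans (apply_zero_of_mem_cornerPaths hτ')
  rw [cornerPaths, Finset.filter_biUnion, Finset.card_biUnion fun m hm m' hm' hne =>
    (disjoint hm hm' hne).mono (Finset.filter_subset _ _) (Finset.filter_subset _ _)]
  refine Finset.sum_congr rfl fun m _ => ?_
  rw [Finset.filter_image, Finset.card_image_of_injective _ (Fin.cons_right_injective _)]

lemma transfer_pow_succ_apply (F : WalkState → ℝ) :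
    (transfer ^ (n + 1)) F s = ∑ m ∈ s.phase.moves, (transfer ^ n) F (s.step m) := by
  rw [transfer, branchOp_pow_succ_apply]
  simp only [ite_mul, one_mul, zero_mul, Finset.sum_ite_mem, Finset.univ_inter]

lemma card_cornerPaths : ((s.cornerPaths n).card : ℝ) = (transfer ^ n) atCorner s := by
  induction n generalizing s with
  | zero =>
    rw [cornerPaths, pow_zero, Module.End.one_apply, atCorner]
    by_cases h : s.depth = 0 <;> simp [h]
  | succ n ih =>
    have := card_filter_cornerPaths_succ (s := s) (n := n) fun _ => True
    simp only [Finset.filter_true] at this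
    rw [this, transfer_pow_succ_apply]
    push_cast
    exact Finset.sum_congr rfl fun m _ => ih

open scoped Classical in
lemma card_filter_cornerPaths (B : Set (ℤ × ℤ)) (i : Fin (n + 1)) :
    (((s.cornerPaths n).filter fun π => π i ∈ B).card : ℝ) =
      (transfer ^ (i : ℕ)) ((pos ⁻¹' B).indicator ((transfer ^ (n - i)) atCorner)) s := by
  have start {n : ℕ} (s : WalkState) :
      (((s.cornerPaths n).filter fun π => π 0 ∈ B).card : ℝ) =
        (pos ⁻¹' B).indicator ((transfer ^ n) atCorner) s := by
    rw [Finset.filter_congr (q := fun _ => s ∈ pos ⁻¹' B) fun π hπ => by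
      rw [apply_zero_of_mem_cornerPaths hπ, mem_preimage], Finset.filter_const, indicator_apply,
      ← card_cornerPaths]
    split_ifs <;> simp
  induction n generalizing s with
  | zero =>
    rw [Fin.fin_one_eq_zero i]
    exact start s
  | succ n ih =>
    cases i using Fin.cases with
    | zero => simpa using start s
    | succ j =>
      rw [card_filter_cornerPaths_succ, Fin.val_succ, transfer_pow_succ_apply, Nat.cast_sum,
        Nat.add_sub_add_right]
      exact Finset.sum_congr rfl fun m _ => by simpa only [Fin.cons_succ] using ih j

end WalkState

open WalkState

lemma finite_twoSidedSet (L : ℕ) : (twoSidedSet L).Finite :=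
  (origin.cornerPaths L).finite_toSet.subset fun _ hπ => (mem_twoSidedSet_iff.1 hπ).1

lemma natCard_twoSidedSet_succ (n : ℕ) :
    (Nat.card (twoSidedSet (n + 1)) : ℝ) = (transfer ^ n) atCorner (origin.step .out) := by
  classical
  have firstStep : twoSidedSet (n + 1) =
      ((origin.cornerPaths (n + 1)).filter fun π => π 1 ∈ ({(1, 0)} : Set (ℤ × ℤ)) : Set _) := by
    ext π
    simp only [mem_twoSidedSet_iff, Finset.coe_filter, mem_ofPred_eq, Nat.zero_lt_succ,
      forall_true_left, mem_singleton_iff]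
    rfl
  have moves : origin.phase.moves = {.out, .toward} := rfl
  have east : origin.step .out ∈ pos ⁻¹' {(1, 0)} := rfl
  have north : origin.step .toward ∉ pos ⁻¹' {(1, 0)} :=
    (by decide : (origin.step .toward).pos ≠ (1, 0))
  calc (Nat.card (twoSidedSet (n + 1)) : ℝ)
      = (transfer ^ 1) ((pos ⁻¹' {(1, 0)}).indicator ((transfer ^ n) atCorner)) origin := by
        rw [firstStep, Nat.card_coe_set_eq, ncard_coe_finset]
        convert card_filter_cornerPaths {(1, 0)} (1 : Fin (n + 2)) <;> simp
    _ = (transfer ^ n) atCorner (origin.step .out) := by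
        rw [transfer_pow_succ_apply, moves, Finset.sum_pair (by decide), pow_zero,
          Module.End.one_apply, indicator_of_mem east,
          indicator_of_notMem north, add_zero]

lemma natCard_inter_twoSidedSet_le {L : ℕ} (B : Set (ℤ × ℤ)) (i : Fin (L + 1)) :
    (Nat.card ↥({π | π i ∈ B} ∩ twoSidedSet L) : ℝ) ≤
      (transfer ^ (i : ℕ)) ((pos ⁻¹' B).indicator ((transfer ^ (L - i)) atCorner)) origin := by
  classical
  rw [← card_filter_cornerPaths, Nat.cast_le, ← Nat.card_eq_finsetCard]
  exact Nat.card_mono (Finset.finite_toSet _) fun π hπ =>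
    Finset.mem_coe.2 (Finset.mem_filter.2 ⟨(mem_twoSidedSet_iff.1 hπ.2).1, hπ.1⟩)

end Automaton

/-! ### The critical chain -/

section Chain

open WalkState

/-- The radius of convergence `z` of the generating function of two-sided prudent walks, with
numerical bounds which single it out among the roots of its polynomial. -/
structure IsCritical (z : ℝ) : Prop where
  root : 2 * z ^ 3 - 2 * z ^ 2 - 2 * z + 1 = 0
  lower : 2 / 5 < z
  upper : z < 41 / 100

lemma exists_isCritical : ∃ z, IsCritical z := by
  have cont : ContinuousOn (fun z : ℝ => 2 * z ^ 3 - 2 * z ^ 2 - 2 * z + 1)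
      (Icc (2 / 5) (41 / 100)) := by fun_prop
  obtain ⟨z, hz, hroot⟩ := intermediate_value_Ioo' (by norm_num) cont
    (show (0 : ℝ) ∈ Ioo _ _ by constructor <;> norm_num)
  exact ⟨z, hroot, hz.1, hz.2⟩

/-- The factor by which the phase contributes to the eigenfunction. -/
noncomputable def phaseWeight (z : ℝ) : WalkPhase → ℝ
  | .fresh => 1
  | .toward => 2 * z
  | .away => z / (1 - 2 * z ^ 2)

/-- The positive eigenfunction of the transfer operator, with eigenvalue `z⁻¹`. -/
noncomputable def eigenfunction (z : ℝ) (s : WalkState) : ℝ :=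
  (2 * z) ^ s.depth * phaseWeight z s.phase

/-- The transition probabilities of the Doob transform of the transfer operator by its
eigenfunction. -/
noncomputable def moveProb (z : ℝ) : WalkPhase → WalkMove → ℝ
  | .fresh, .out => z
  | .fresh, .toward => z
  | .fresh, .away => 1 - 2 * z
  | .toward, .out => 1 / 2
  | .toward, .toward => 1 / 2
  | .toward, .away => 0
  | .away, .out => 1 - 2 * z ^ 2
  | .away, .toward => 0
  | .away, .away => 2 * z ^ 2

/-- The Markov operator of the infinite two-sided walk. -/
noncomputable def chain (z : ℝ) : Module.End ℝ (WalkState → ℝ) :=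
  branchOp step fun s m => moveProb z s.phase m

lemma chain_apply (z : ℝ) (F : WalkState → ℝ) (s : WalkState) :
    chain z F s = moveProb z s.phase .out * F (s.step .out) +
      moveProb z s.phase .toward * F (s.step .toward) +
      moveProb z s.phase .away * F (s.step .away) :=
  sum_walkMove fun m => moveProb z s.phase m * F (s.step m)

namespace IsCritical

variable {z : ℝ}

lemma pos (hz : IsCritical z) : 0 < z := lt_trans (by norm_num) hz.lower

lemma one_sub_two_mul_sq_gt (hz : IsCritical z) : 3 / 5 < 1 - 2 * z ^ 2 := by
  nlinarith [hz.lower, hz.upper]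

lemma one_sub_two_mul_sq_ne_zero (hz : IsCritical z) : 1 - 2 * z ^ 2 ≠ 0 :=
  (lt_trans (by norm_num) hz.one_sub_two_mul_sq_gt).ne'

lemma isStochastic (hz : IsCritical z) :
    IsStochastic fun (s : WalkState) m => moveProb z s.phase m where
  nonneg s m := by
    have := hz.one_sub_two_mul_sq_gt
    have := hz.upper
    have := hz.pos
    change 0 ≤ moveProb z s.phase m
    cases s.phase <;> cases m <;> simp only [moveProb] <;> first | positivity | linarith
  sum_eq_one s := by
    rw [sum_walkMove]
    cases s.phase <;> simp only [moveProb] <;> ring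

lemma eigenfunction_step (hz : IsCritical z) (s : WalkState) (m : WalkMove) :
    (if m ∈ s.phase.moves then 1 else 0) * eigenfunction z (s.step m) =
      z⁻¹ * eigenfunction z s * moveProb z s.phase m := by
  have hz₀ := hz.pos.ne'
  obtain ⟨q, hq⟩ : ∃ q, 1 - 2 * z ^ 2 = q := ⟨_, rfl⟩
  have hq₀ : q ≠ 0 := hq ▸ hz.one_sub_two_mul_sq_ne_zero
  have escape : 2 * z ^ 3 = (1 - 2 * z) * q := by
    rw [← hq]
    linear_combination -hz.root
  obtain ⟨b, x, y, d, φ⟩ := s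
  cases φ <;> cases m <;> cases d <;>
    simp only [WalkPhase.moves, step, eigenfunction, phaseWeight, moveProb, pow_succ (2 * z), hq,
      Finset.mem_insert, Finset.mem_singleton, reduceCtorEq, or_false, or_true,
      if_true, if_false, or_self] <;> field_simp <;> first | linear_combination escape | ring

lemma phaseWeight_mem_Icc (hz : IsCritical z) (φ : WalkPhase) :
    phaseWeight z φ ∈ Icc (1 / 2) 1 := by
  have hq := hz.one_sub_two_mul_sq_gt
  have := hz.lower
  have := hz.upper
  cases φ <;> simp only [phaseWeight, mem_Icc]
  · norm_num
  · constructor <;> linarith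
  · rw [le_div_iff₀ (by linarith), div_le_one (by linarith)]
    constructor <;> nlinarith

lemma two_mul_pow_mem_Icc (hz : IsCritical z) (d : ℕ) : (2 * z) ^ d ∈ Icc 0 1 :=
  ⟨by have := hz.pos; positivity, pow_le_one₀ (by linarith [hz.pos]) (by linarith [hz.upper])⟩

lemma eigenfunction_nonneg (hz : IsCritical z) : 0 ≤ eigenfunction z := fun s =>
  mul_nonneg (hz.two_mul_pow_mem_Icc _).1 (le_trans (by norm_num) (hz.phaseWeight_mem_Icc _).1)

lemma eigenfunction_le_one (hz : IsCritical z) : eigenfunction z ≤ 1 := fun s =>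
  mul_le_one₀ (hz.two_mul_pow_mem_Icc _).2
    (le_trans (by norm_num) (hz.phaseWeight_mem_Icc s.phase).1) (hz.phaseWeight_mem_Icc _).2

lemma atCorner_le_eigenfunction (hz : IsCritical z) : atCorner ≤ (2 : ℝ) • eigenfunction z := by
  refine indicator_le' (fun s hs => ?_) fun s _ =>
    mul_nonneg zero_le_two (hz.eigenfunction_nonneg s)
  rw [mem_ofPred_eq] at hs
  rw [Pi.smul_apply, smul_eq_mul, Pi.one_apply, eigenfunction, hs, pow_zero, one_mul]
  linarith [(hz.phaseWeight_mem_Icc s.phase).1]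

lemma transfer_pow_eigenfunction_mul (hz : IsCritical z) (n : ℕ) (F : WalkState → ℝ) :
    (transfer ^ n) (eigenfunction z * F) = z⁻¹ ^ n • (eigenfunction z * (chain z ^ n) F) :=
  branchOp_pow_mul_of_conj hz.eigenfunction_step n F

end IsCritical

/-- A Lyapunov function of the chain, exponential in the distance to the corner. -/
noncomputable def lyapunov (s : WalkState) : ℝ :=
  (5 / 4) ^ s.depth *
    match s.phase with
    | .fresh => 6
    | .toward => 5
    | .away => 7

lemma pow_succ_depth_le_lyapunov (s : WalkState) : (5 / 4 : ℝ) ^ (s.depth + 1) ≤ lyapunov s := by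
  rw [pow_succ, lyapunov]
  gcongr
  cases s.phase <;> norm_num

lemma IsCritical.chain_lyapunov_le {z : ℝ} (hz : IsCritical z) (s : WalkState) :
    chain z lyapunov s ≤ lyapunov s + 1 := by
  have := hz.lower
  have := hz.upper
  obtain ⟨b, x, y, d, φ⟩ := s
  have hu (n : ℕ) : (1 : ℝ) ≤ (5 / 4) ^ n := one_le_pow₀ (by norm_num)
  cases φ <;> rcases d with _ | d <;>
    simp only [chain_apply, moveProb, step, lyapunov, pow_succ (5 / 4 : ℝ)]
  case fresh.zero => nlinarith
  case fresh.succ => nlinarith [hu d]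
  case toward.zero => norm_num
  case toward.succ => linarith
  case away.zero => nlinarith
  case away.succ =>
    have square : z ^ 2 ≤ (41 / 100) ^ 2 := pow_le_pow_left₀ hz.pos.le hz.upper.le 2
    nlinarith [mul_le_mul_of_nonneg_left square (zero_le_one.trans (hu d))]

/-- The speed at which `x + y` grows along the infinite two-sided walk. -/
noncomputable def speed (z : ℝ) : ℝ := (1 - 2 * z ^ 2) / (3 - 4 * z - 2 * z ^ 2)

/-- The sum of the coordinates, corrected so as to have constant drift `speed z`. -/
noncomputable def sumCorrector (z : ℝ) (s : WalkState) : ℝ :=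
  s.x + s.y - speed z * s.depth +
    match s.phase with
    | .fresh => speed z - 1
    | .toward => 0
    | .away => -(4 * z ^ 2 / (3 - 4 * z - 2 * z ^ 2))

/-- The factor by which the difference of the coordinates changes between the frame of a side and
the plane. -/
def sideSign : Bool → ℝ
  | true => 1
  | false => -1

/-- The weight of the distance to the corner in `diffCorrector`. -/
noncomputable def diffSlope (z : ℝ) : ℝ := (1 - 2 * z ^ 2) / (1 - 4 * z ^ 2)

/-- The difference of the coordinates, corrected so as to have zero drift. -/
noncomputable def diffCorrector (z : ℝ) (s : WalkState) : ℝ :=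
  sideSign s.side * (s.x - s.y + diffSlope z * s.depth +
    match s.phase with
    | .fresh => diffSlope z - 1
    | .toward => 0
    | .away => 1 / (1 - 4 * z ^ 2))

lemma abs_sideSign (b : Bool) : |sideSign b| = 1 := by
  cases b <;> simp [sideSign]

lemma pos_fst_add_snd (s : WalkState) : (s.pos.1 + s.pos.2 : ℝ) = s.x + s.y - s.depth := by
  obtain ⟨b, x, y, d, φ⟩ := s
  cases b <;> simp only [pos, sideFrame, AddEquiv.refl_apply, AddEquiv.coe_prodComm,
    Prod.swap_prod_mk] <;> push_cast <;> ring

lemma pos_fst_sub_snd (s : WalkState) :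
    (s.pos.1 - s.pos.2 : ℝ) = sideSign s.side * (s.x - s.y + s.depth) := by
  obtain ⟨b, x, y, d, φ⟩ := s
  cases b <;> simp only [pos, sideFrame, AddEquiv.refl_apply, AddEquiv.coe_prodComm,
    Prod.swap_prod_mk, sideSign] <;> push_cast <;> ring

namespace IsCritical

variable {z : ℝ}

lemma one_lt_speed_denom (hz : IsCritical z) : 1 < 3 - 4 * z - 2 * z ^ 2 := by
  nlinarith [hz.lower, hz.upper]

lemma lt_diffSlope_denom (hz : IsCritical z) : 1 / 4 < 1 - 4 * z ^ 2 := by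
  nlinarith [hz.lower, hz.upper]

lemma speed_mem_Ioo (hz : IsCritical z) : speed z ∈ Ioo 0 1 := by
  have hP := hz.one_lt_speed_denom
  have hq := hz.one_sub_two_mul_sq_gt
  refine ⟨div_pos (by linarith) (by linarith), (div_lt_one (by linarith)).2 ?_⟩
  linarith [hz.upper]

lemma sumCorrector_away_mem_Icc (hz : IsCritical z) :
    4 * z ^ 2 / (3 - 4 * z - 2 * z ^ 2) ∈ Icc 0 1 := by
  have hP := hz.one_lt_speed_denom
  refine ⟨by positivity, (div_le_one (by linarith)).2 ?_⟩
  nlinarith [hz.lower, hz.upper]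

lemma diffSlope_mem_Icc (hz : IsCritical z) : diffSlope z ∈ Icc 1 4 := by
  have hQ := hz.lt_diffSlope_denom
  rw [diffSlope, mem_Icc, le_div_iff₀ (by linarith), div_le_iff₀ (by linarith)]
  constructor <;> nlinarith [sq_nonneg z]

lemma diffCorrector_away_mem_Icc (hz : IsCritical z) : 1 / (1 - 4 * z ^ 2) ∈ Icc 0 4 := by
  have hQ := hz.lt_diffSlope_denom
  rw [mem_Icc, div_le_iff₀ (by linarith)]
  exact ⟨div_nonneg zero_le_one (by linarith), by linarith⟩

lemma chain_sumCorrector (hz : IsCritical z) (s : WalkState) :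
    chain z (sumCorrector z) s = sumCorrector z s + speed z := by
  obtain ⟨P, hP⟩ : ∃ P, 3 - 4 * z - 2 * z ^ 2 = P := ⟨_, rfl⟩
  have hP₀ : P ≠ 0 := hP ▸ (zero_lt_one.trans hz.one_lt_speed_denom).ne'
  obtain ⟨b, x, y, d, φ⟩ := s
  cases φ <;> rcases d with _ | d <;>
    simp only [chain_apply, moveProb, step, sumCorrector, speed, hP] <;> push_cast <;>
    field_simp <;> rw [← hP] <;> ring

lemma chain_diffCorrector (hz : IsCritical z) (s : WalkState) :
    chain z (diffCorrector z) s = diffCorrector z s := by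
  obtain ⟨Q, hQ⟩ : ∃ Q, 1 - 4 * z ^ 2 = Q := ⟨_, rfl⟩
  have hQ₀ : Q ≠ 0 := hQ ▸ (lt_trans (by norm_num) hz.lt_diffSlope_denom).ne'
  have root := hz.root
  obtain ⟨b, x, y, d, φ⟩ := s
  cases b <;> cases φ <;> rcases d with _ | d <;>
    simp only [chain_apply, moveProb, step, diffCorrector, diffSlope, sideSign, Bool.not_true,
      Bool.not_false, hQ] <;> push_cast <;> field_simp <;> rw [← hQ] <;>
      first | ring1 | linear_combination 2 * root | linear_combination -2 * root

lemma abs_sumCorrector_step_sub_le (hz : IsCritical z) (s : WalkState) (m : WalkMove) :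
    |sumCorrector z (s.step m) - sumCorrector z s| ≤ 10 := by
  obtain ⟨hC₀, hC₁⟩ := hz.speed_mem_Ioo
  obtain ⟨ha₀, ha₁⟩ := hz.sumCorrector_away_mem_Icc
  obtain ⟨b, x, y, d, φ⟩ := s
  cases φ <;> cases m <;> rcases d with _ | d <;> simp only [step, sumCorrector, abs_le] <;>
    push_cast <;> constructor <;> linarith

lemma abs_diffCorrector_step_sub_le (hz : IsCritical z) (s : WalkState) (m : WalkMove) :
    |diffCorrector z (s.step m) - diffCorrector z s| ≤ 10 := by
  obtain ⟨hC₀, hC₁⟩ := hz.diffSlope_mem_Icc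
  obtain ⟨ha₀, ha₁⟩ := hz.diffCorrector_away_mem_Icc
  obtain ⟨b, x, y, d, φ⟩ := s
  cases b <;> cases φ <;> cases m <;> rcases d with _ | d <;>
    simp only [step, diffCorrector, sideSign, abs_le, Bool.not_true, Bool.not_false] <;>
    push_cast <;> constructor <;> linarith

lemma abs_sumCorrector_sub_pos_le (hz : IsCritical z) (s : WalkState) :
    |sumCorrector z s - (s.pos.1 + s.pos.2)| ≤ 10 * (s.depth + 1) := by
  obtain ⟨hC₀, hC₁⟩ := hz.speed_mem_Ioo
  obtain ⟨ha₀, ha₁⟩ := hz.sumCorrector_away_mem_Icc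
  rw [pos_fst_add_snd, sumCorrector, abs_le]
  cases s.phase <;> constructor <;> nlinarith [s.depth.cast_nonneg (α := ℝ)]

lemma abs_diffCorrector_sub_pos_le (hz : IsCritical z) (s : WalkState) :
    |diffCorrector z s - (s.pos.1 - s.pos.2)| ≤ 10 * (s.depth + 1) := by
  obtain ⟨hC₀, hC₁⟩ := hz.diffSlope_mem_Icc
  obtain ⟨ha₀, ha₁⟩ := hz.diffCorrector_away_mem_Icc
  rw [pos_fst_sub_snd, diffCorrector, ← mul_sub, abs_mul, abs_sideSign, one_mul, abs_le]
  cases s.phase <;> constructor <;> nlinarith [s.depth.cast_nonneg (α := ℝ)]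

lemma norm_pos_sub_le (hz : IsCritical z) (s : WalkState) (n : ℝ) :
    ‖toR s.pos - (speed z / 2 * n) • evec 1‖ ≤
      (|sumCorrector z s - speed z * n| + |diffCorrector z s|) / 2 + 10 * (s.depth + 1) := by
  have sum := abs_le.1 (hz.abs_sumCorrector_sub_pos_le s)
  have diff := abs_le.1 (hz.abs_diffCorrector_sub_pos_le s)
  have sum' := abs_le.1 (le_refl |sumCorrector z s - speed z * n|)
  have diff' := abs_le.1 (le_refl |diffCorrector z s|)
  simp only [Prod.norm_def, Real.norm_eq_abs, toR, evec, Prod.fst_sub, Prod.snd_sub, Prod.smul_mk,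
    smul_eq_mul, mul_one, sup_le_iff, abs_le]
  refine ⟨⟨?_, ?_⟩, ?_, ?_⟩ <;> linarith

lemma expSmall_chain_far (hz : IsCritical z) {δ : ℝ} (hδ : 0 < δ) (s : WalkState) :
    ExpSmall fun L i => (chain z ^ i)
      ((WalkState.pos ⁻¹' {p | δ * L < ‖toR p - (speed z / 2 * i) • evec 1‖}).indicator 1) s := by
  have sum := hz.isStochastic.expSmall_tail hz.chain_sumCorrector (by norm_num : (0 : ℝ) < 10)
    hz.abs_sumCorrector_step_sub_le (half_pos hδ) s
  have diff := hz.isStochastic.expSmall_tail (c := 0)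
    (fun t => (hz.chain_diffCorrector t).trans (add_zero _).symm) (by norm_num : (0 : ℝ) < 10)
    hz.abs_diffCorrector_step_sub_le (half_pos hδ) s
  have depth := hz.isStochastic.expSmall_tail_of_drift hz.chain_lyapunov_le zero_le_one
    (Real.log_pos (by norm_num : (1 : ℝ) < 5 / 4)) (D := fun t => (t.depth + 1 : ℕ))
    (fun t => by
      rw [mul_comm, Real.exp_nat_mul, Real.exp_log (by norm_num)]
      exact pow_succ_depth_le_lyapunov t) (by positivity : 0 < δ / 20) s
  refine ((sum.add diff).add depth).mono fun L i _ => ?_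
  have cover : WalkState.pos ⁻¹' {p | δ * L < ‖toR p - (speed z / 2 * i) • evec 1‖} ⊆
      {t | δ / 2 * L < |sumCorrector z t - speed z * i|} ∪
        {t | δ / 2 * L < |diffCorrector z t - 0 * i|} ∪
          {t | δ / 20 * L < (t.depth + 1 : ℕ)} := by
    rintro t (far : δ * L < ‖toR t.pos - (speed z / 2 * i) • evec 1‖)
    by_contra near
    simp only [mem_union, mem_ofPred_eq, not_or, not_lt, zero_mul, sub_zero] at near
    obtain ⟨⟨sum_le, diff_le⟩, depth_le⟩ := near
    push_cast at depth_le
    linarith [hz.norm_pos_sub_le t i]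
  have nonneg := hz.isStochastic.nonneg
  exact (branchOp_pow_indicator_le_add (f := WalkState.step) nonneg cover i s).trans
    (add_le_add_left (branchOp_pow_indicator_le_add nonneg subset_rfl i s) _)

end IsCritical

lemma WalkPhase.out_mem_moves (φ : WalkPhase) : .out ∈ φ.moves := by
  cases φ <;> decide

lemma WalkPhase.toward_mem_moves {φ : WalkPhase} (hφ : φ ≠ .away) : .toward ∈ φ.moves := by
  cases φ
  exacts [by decide, by decide, absurd rfl hφ]

lemma transfer_pow_step_le {s : WalkState} {m : WalkMove} (hm : m ∈ s.phase.moves) (n : ℕ) :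
    (transfer ^ n) atCorner (s.step m) ≤ (transfer ^ (n + 1)) atCorner s := by
  rw [transfer_pow_succ_apply]
  simp only [← card_cornerPaths]
  exact Finset.single_le_sum (f := fun m => (((s.step m).cornerPaths n).card : ℝ))
    (fun _ _ => Nat.cast_nonneg _) hm

lemma one_le_transfer_pow_atCorner {s : WalkState} (hs : s.phase ≠ .away) {n : ℕ}
    (hn : s.depth ≤ n) : 1 ≤ (transfer ^ n) atCorner s := by
  induction n generalizing s with
  | zero =>
    have corner : s ∈ {s : WalkState | s.depth = 0} := Nat.le_zero.1 hn
    rw [pow_zero, Module.End.one_apply, atCorner, indicator_of_mem corner, Pi.one_apply]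
  | succ n ih =>
    obtain ⟨b, x, y, _ | d, φ⟩ := s
    · exact (ih (s := step ⟨b, x, y, 0, φ⟩ .out) nofun n.zero_le).trans
        (transfer_pow_step_le φ.out_mem_moves n)
    · exact (ih (s := step ⟨b, x, y, d + 1, φ⟩ .toward) nofun (Nat.le_of_succ_le_succ hn)).trans
        (transfer_pow_step_le (WalkPhase.toward_mem_moves hs) n)

lemma indicator_depth_le_transfer_pow_atCorner (m : ℕ) :
    {s : WalkState | s.depth ≤ m}.indicator 1 ≤ (transfer ^ (m + 1)) atCorner := by
  refine indicator_le' (fun s hs => ?_) fun s _ => ?_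
  · exact (one_le_transfer_pow_atCorner (s := s.step .out) nofun hs).trans
      (transfer_pow_step_le s.phase.out_mem_moves m)
  · rw [← card_cornerPaths]
    exact Nat.cast_nonneg _

lemma one_le_natCard_twoSidedSet {L : ℕ} (hL : 0 < L) : (1 : ℝ) ≤ Nat.card (twoSidedSet L) := by
  obtain ⟨n, rfl⟩ := Nat.exists_eq_succ_of_ne_zero hL.ne'
  rw [natCard_twoSidedSet_succ]
  exact one_le_transfer_pow_atCorner (s := origin.step .out) nofun n.zero_le

lemma monotone_transfer_pow (n : ℕ) : Monotone (transfer ^ n) :=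
  monotone_branchOp_pow (fun s m => by change 0 ≤ ite _ _ _; split_ifs <;> norm_num) n

namespace IsCritical

variable {z : ℝ}

lemma inv_lt (hz : IsCritical z) : z⁻¹ < 5 / 2 := by
  rw [inv_lt_comm₀ hz.pos (by norm_num)]
  linarith [hz.lower]

lemma chain_pow_indicator_nonneg (hz : IsCritical z) (n : ℕ) (A : Set WalkState) (s : WalkState) :
    0 ≤ (chain z ^ n) (A.indicator 1) s :=
  branchOp_pow_nonneg hz.isStochastic.nonneg n (indicator_nonneg fun _ _ => zero_le_one) s

lemma one_sub_le_chain_pow_depth_le (hz : IsCritical z) (n m : ℕ) (s : WalkState) :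
    1 - ((5 / 4) ^ m)⁻¹ * (lyapunov s + n) ≤
      (chain z ^ n) ({s | s.depth ≤ m}.indicator 1) s := by
  have deep : (chain z ^ n) ({s | m < s.depth}.indicator 1) s ≤
      ((5 / 4) ^ m)⁻¹ * (lyapunov s + n * 1) :=
    hz.isStochastic.branchOp_pow_indicator_le_of_drift hz.chain_lyapunov_le
      (fun t => (by positivity : (0 : ℝ) ≤ (5 / 4) ^ (t.depth + 1)).trans
        (pow_succ_depth_le_lyapunov t)) (by positivity)
      (fun t (ht : m < t.depth) => (pow_le_pow_right₀ (by norm_num) (by omega)).trans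
        (pow_succ_depth_le_lyapunov t)) n s
  have total : (chain z ^ n) 1 s = 1 := congrFun (hz.isStochastic.branchOp_pow_one n) s
  have cover : (chain z ^ n) (univ.indicator 1) s ≤
      (chain z ^ n) ({s | s.depth ≤ m}.indicator 1) s +
        (chain z ^ n) ({s | m < s.depth}.indicator 1) s :=
    branchOp_pow_indicator_le_add hz.isStochastic.nonneg (fun t _ => le_or_gt t.depth m) n s
  rw [indicator_univ, total] at cover
  linarith

lemma inv_pow_mul_le_transfer_pow_atCorner (hz : IsCritical z) (n m : ℕ) (s : WalkState) :
    z⁻¹ ^ n * (eigenfunction z s * (1 - ((5 / 4) ^ m)⁻¹ * (lyapunov s + n))) ≤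
      (transfer ^ (n + (m + 1))) atCorner s := by
  have reach : eigenfunction z * {s : WalkState | s.depth ≤ m}.indicator 1 ≤
      (transfer ^ (m + 1)) atCorner := by
    refine le_trans (fun t => ?_) (indicator_depth_le_transfer_pow_atCorner m)
    exact mul_le_of_le_one_left (indicator_nonneg (fun _ _ => zero_le_one) t)
      (hz.eigenfunction_le_one t)
  calc z⁻¹ ^ n * (eigenfunction z s * (1 - ((5 / 4) ^ m)⁻¹ * (lyapunov s + n)))
      ≤ z⁻¹ ^ n * (eigenfunction z s * (chain z ^ n) ({s | s.depth ≤ m}.indicator 1) s) := by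
        have := hz.pos
        have := hz.eigenfunction_nonneg s
        gcongr
        exact hz.one_sub_le_chain_pow_depth_le n m s
    _ = (transfer ^ n) (eigenfunction z * {s : WalkState | s.depth ≤ m}.indicator 1) s := by
        rw [hz.transfer_pow_eigenfunction_mul]
        rfl
    _ ≤ (transfer ^ n) ((transfer ^ (m + 1)) atCorner) s := monotone_transfer_pow n reach s
    _ = _ := by rw [pow_add transfer n, Module.End.mul_apply]

lemma inv_pow_succ_le_natCard_twoSidedSet (hz : IsCritical z) {N m : ℕ}
    (hm : 2 * (N + 6 : ℝ) ≤ (5 / 4) ^ m) :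
    z⁻¹ ^ (N + 1) ≤ 2 * (5 / 2) ^ (m + 2) * Nat.card (twoSidedSet (N + 1)) := by
  have hz₀ := inv_nonneg.2 hz.pos.le
  have pow_le (k : ℕ) : z⁻¹ ^ k ≤ (5 / 2) ^ k := pow_le_pow_left₀ hz₀ hz.inv_lt.le k
  rcases lt_or_ge N (m + 1) with short | long
  · have one_le := one_le_natCard_twoSidedSet N.succ_pos
    have exponent : (5 / 2 : ℝ) ^ (N + 1) ≤ (5 / 2) ^ (m + 2) :=
      pow_le_pow_right₀ (by norm_num) (by omega)
    nlinarith [pow_le (N + 1), pow_pos (by norm_num : (0 : ℝ) < 5 / 2) (m + 2)]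
  · obtain ⟨n, rfl⟩ := Nat.exists_eq_add_of_le' long
    have half : ((5 / 4 : ℝ) ^ m)⁻¹ * (6 + n) ≤ 1 / 2 := by
      rw [inv_mul_le_iff₀ (by positivity)]
      push_cast at hm
      linarith [m.cast_nonneg (α := ℝ)]
    have bound := hz.inv_pow_mul_le_transfer_pow_atCorner n m (origin.step .out)
    have weight : eigenfunction z (origin.step .out) = 1 := by
      simp [eigenfunction, phaseWeight, origin, step]
    have potential : lyapunov (origin.step .out) = 6 := by
      simp [lyapunov, origin, step]
    rw [weight, potential, one_mul] at bound
    rw [natCard_twoSidedSet_succ]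
    calc z⁻¹ ^ (n + (m + 1) + 1) = z⁻¹ ^ n * z⁻¹ ^ (m + 2) := by ring
      _ ≤ 2 * (transfer ^ (n + (m + 1))) atCorner (origin.step .out) * (5 / 2) ^ (m + 2) := by
          have := mul_le_mul_of_nonneg_left half (pow_nonneg hz₀ n)
          have := pow_nonneg hz₀ n
          exact mul_le_mul (by linarith) (pow_le _) (pow_nonneg hz₀ _) (by linarith)
      _ = _ := by ring

lemma exists_inv_pow_le_natCard_twoSidedSet (hz : IsCritical z) :
    ∃ C : ℝ, 0 < C ∧ ∀ L : ℕ, 0 < L → z⁻¹ ^ L ≤ C * (L + 1) ^ 5 * Nat.card (twoSidedSet L) := by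
  refine ⟨2 * (5 / 2) ^ 2 * 15 ^ 5, by norm_num, fun L hL => ?_⟩
  obtain ⟨N, rfl⟩ := Nat.exists_eq_succ_of_ne_zero hL.ne'
  obtain ⟨k, hk, hk'⟩ := exists_nat_pow_near (x := 2 * (N + 6 : ℝ))
    (by linarith [N.cast_nonneg (α := ℝ)]) (by norm_num : (1 : ℝ) < 5 / 4)
  have base : (5 / 2 : ℝ) ^ (k + 1) ≤ (15 * ((N + 1 : ℕ) + 1)) ^ 5 :=
    calc (5 / 2 : ℝ) ^ (k + 1) ≤ ((5 / 4) ^ 5) ^ (k + 1) := by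
          gcongr
          norm_num
      _ = (5 / 4 * (5 / 4) ^ k) ^ 5 := by rw [← pow_succ', pow_right_comm]
      _ ≤ (15 * ((N + 1 : ℕ) + 1)) ^ 5 := by
          refine pow_le_pow_left₀ (by positivity) ?_ 5
          push_cast
          linarith
  refine (hz.inv_pow_succ_le_natCard_twoSidedSet hk'.le).trans ?_
  refine mul_le_mul_of_nonneg_right ?_ (Nat.cast_nonneg _)
  linarith [pow_add (5 / 2 : ℝ) (k + 1) 2, mul_pow (15 : ℝ) ((N + 1 : ℕ) + 1) 5]

lemma natCard_inter_twoSidedSet_le_chain (hz : IsCritical z) {L : ℕ} (B : Set (ℤ × ℤ))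
    (i : Fin (L + 1)) :
    (Nat.card ↥({π | π i ∈ B} ∩ twoSidedSet L) : ℝ) ≤
      2 * z⁻¹ ^ L * (chain z ^ (i : ℕ)) ((WalkState.pos ⁻¹' B).indicator 1) origin := by
  have hz₀ := inv_nonneg.2 hz.pos.le
  have remaining : (transfer ^ (L - i)) atCorner ≤ (2 * z⁻¹ ^ (L - i)) • eigenfunction z := by
    refine (monotone_transfer_pow _ hz.atCorner_le_eigenfunction).trans_eq ?_
    have := hz.transfer_pow_eigenfunction_mul (L - i) 1
    rw [mul_one, show (chain z ^ (L - i)) 1 = 1 from hz.isStochastic.branchOp_pow_one _,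
      mul_one] at this
    rw [map_smul, this, smul_smul]
  have restricted : (WalkState.pos ⁻¹' B).indicator ((transfer ^ (L - i)) atCorner) ≤
      (2 * z⁻¹ ^ (L - i)) • (eigenfunction z * (WalkState.pos ⁻¹' B).indicator 1) := by
    intro s
    by_cases hs : s ∈ WalkState.pos ⁻¹' B
    · simpa [hs] using remaining s
    · simp [hs]
  have positive := hz.chain_pow_indicator_nonneg i (WalkState.pos ⁻¹' B) origin
  calc (Nat.card ↥({π | π i ∈ B} ∩ twoSidedSet L) : ℝ)
      ≤ (transfer ^ (i : ℕ)) ((WalkState.pos ⁻¹' B).indicator ((transfer ^ (L - i)) atCorner))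
          origin := natCard_inter_twoSidedSet_le B i
    _ ≤ 2 * z⁻¹ ^ (L - i) * (z⁻¹ ^ (i : ℕ) * (eigenfunction z origin *
          (chain z ^ (i : ℕ)) ((WalkState.pos ⁻¹' B).indicator 1) origin)) := by
        refine (monotone_transfer_pow i restricted origin).trans_eq ?_
        rw [map_smul, hz.transfer_pow_eigenfunction_mul]
        rfl
    _ ≤ 2 * z⁻¹ ^ (L - i) * (z⁻¹ ^ (i : ℕ) *
          (chain z ^ (i : ℕ)) ((WalkState.pos ⁻¹' B).indicator 1) origin) := by
        gcongr
        exact mul_le_of_le_one_left positive (hz.eigenfunction_le_one origin)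
    _ = _ := by
        rw [← mul_assoc, mul_assoc 2, ← pow_add, Nat.sub_add_cancel i.is_le]

lemma exists_probUnifPlus_le (hz : IsCritical z) :
    ∃ C : ℝ, 0 < C ∧ ∀ (L : ℕ) (i : Fin (L + 1)) (B : Set (ℤ × ℤ)), 0 < L →
      probUnifPlus L {π | π i ∈ B} ≤
        C * ((L + 1) ^ 5 * (chain z ^ (i : ℕ)) ((WalkState.pos ⁻¹' B).indicator 1) origin) := by
  obtain ⟨C, hC, total⟩ := hz.exists_inv_pow_le_natCard_twoSidedSet
  refine ⟨2 * C, by positivity, fun L i B hL => ?_⟩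
  have positive := hz.chain_pow_indicator_nonneg i (WalkState.pos ⁻¹' B) origin
  refine div_le_of_le_mul₀ (Nat.cast_nonneg _) (by positivity)
    ((hz.natCard_inter_twoSidedSet_le_chain B i).trans ?_)
  calc 2 * z⁻¹ ^ L * (chain z ^ (i : ℕ)) ((WalkState.pos ⁻¹' B).indicator 1) origin
      ≤ 2 * (C * (L + 1) ^ 5 * Nat.card (twoSidedSet L)) *
          (chain z ^ (i : ℕ)) ((WalkState.pos ⁻¹' B).indicator 1) origin := by
        gcongr
        exact total L hL
    _ = _ := by ring

end IsCritical

end Chain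

/-! ### Concentration -/

section Conclusion

lemma probUnifPlus_le_one (L : ℕ) (A : Set (Fin (L + 1) → ℤ × ℤ)) : probUnifPlus L A ≤ 1 :=
  div_le_one_of_le₀ (Nat.cast_le.2 (Nat.card_mono (finite_twoSidedSet L) inter_subset_right))
    (Nat.cast_nonneg _)

lemma one_sub_sum_le_probUnifPlus {L : ℕ} (hL : 0 < L) {A : Set (Fin (L + 1) → ℤ × ℤ)}
    {B : Fin (L + 1) → Set (ℤ × ℤ)} (cover : ∀ π, (∀ i, π i ∉ B i) → π ∈ A) :
    1 - ∑ i, probUnifPlus L {π | π i ∈ B i} ≤ probUnifPlus L A := by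
  have cover' : twoSidedSet L ⊆
      A ∩ twoSidedSet L ∪ ⋃ i, {π | π i ∈ B i} ∩ twoSidedSet L := by
    intro π hπ
    by_cases h : ∀ i, π i ∉ B i
    · exact .inl ⟨cover π h, hπ⟩
    · obtain ⟨i, hi⟩ := not_forall_not.1 h
      exact .inr (mem_iUnion.2 ⟨i, hi, hπ⟩)
  have finite (D : Set (Fin (L + 1) → ℤ × ℤ)) : (D ∩ twoSidedSet L).Finite :=
    (finite_twoSidedSet L).subset inter_subset_right
  have count : (twoSidedSet L).ncard ≤ (A ∩ twoSidedSet L).ncard +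
      ∑ i, ({π | π i ∈ B i} ∩ twoSidedSet L).ncard := by
    refine (ncard_le_ncard cover' ?_).trans ((ncard_union_le _ _).trans ?_)
    · exact (finite _).union (finite_iUnion fun i => finite _)
    · gcongr
      exact ncard_iUnion_le_of_fintype _
  have nonempty := zero_lt_one.trans_le (one_le_natCard_twoSidedSet hL)
  simp only [probUnifPlus, ← Finset.sum_div]
  rw [one_sub_div nonempty.ne']
  gcongr
  rw [sub_le_iff_le_add]
  exact_mod_cast count

lemma enorm2_le_two_mul_norm (v : ℝ × ℝ) : enorm2 v ≤ 2 * ‖v‖ := by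
  have fst := sq_le_sq' (neg_le_of_abs_le (norm_fst_le v)) (le_of_abs_le (norm_fst_le v))
  have snd := sq_le_sq' (neg_le_of_abs_le (norm_snd_le v)) (le_of_abs_le (norm_snd_le v))
  exact Real.sqrt_le_iff.2 ⟨by positivity, by nlinarith [sq_nonneg ‖v‖]⟩

lemma exists_rescaled_sub_eq {L : ℕ} (hL : 0 < L) (π : Fin (L + 1) → ℤ × ℤ) (c : ℝ) (e : ℝ × ℝ)
    {t : ℝ} (ht : t ∈ Icc 0 1) :
    ∃ (i j : Fin (L + 1)) (θ : ℝ), θ ∈ Icc 0 1 ∧ rescaled L π t - (c * t) • e =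
      (L : ℝ)⁻¹ • ((1 - θ) • (toR (π i) - (c * (i : ℕ)) • e) +
        θ • (toR (π j) - (c * (j : ℕ)) • e)) := by
  have hL' : (0 : ℝ) < L := Nat.cast_pos.2 hL
  have floor_le : (⌊t * L⌋₊ : ℝ) ≤ t * L := Nat.floor_le (mul_nonneg ht.1 hL'.le)
  have lt_floor : t * L < ⌊t * L⌋₊ + 1 := Nat.lt_floor_add_one _
  set n := ⌊t * L⌋₊ with hn
  set θ := t * L - n with hθ
  have n_le : n ≤ L := by exact_mod_cast floor_le.trans (mul_le_of_le_one_left hL'.le ht.2)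
  have min_n : ((min n L : ℕ) : ℝ) = n := by rw [min_eq_left n_le]
  have min_succ : θ * (min (n + 1) L : ℕ) = θ * (n + 1) := by
    rcases n_le.lt_or_eq with lt | eq
    · rw [min_eq_left lt, Nat.cast_succ]
    · have : θ = 0 := by
        rw [eq] at floor_le hθ
        linarith [mul_le_of_le_one_left hL'.le ht.2]
      rw [this, zero_mul, zero_mul]
  refine ⟨⟨min n L, by omega⟩, ⟨min (n + 1) L, by omega⟩, θ, ⟨by linarith, by linarith⟩, ?_⟩
  have next : θ • (c * (min (n + 1) L : ℕ)) • e = (c * (θ * (n + 1))) • e := by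
    rw [smul_smul, ← min_succ, mul_left_comm]
  have time : (c * t) • e = (L : ℝ)⁻¹ • (c * (n + θ)) • e := by
    rw [smul_smul, hθ]
    congr 1
    field_simp
    ring
  simp only [rescaled, ← hn, ← hθ, smul_sub, next, min_n, time]
  module

lemma enorm2_rescaled_sub_le {L : ℕ} (hL : 0 < L) {π : Fin (L + 1) → ℤ × ℤ} {c δ : ℝ} {e : ℝ × ℝ}
    (h : ∀ i : Fin (L + 1), ‖toR (π i) - (c * (i : ℕ)) • e‖ ≤ δ * L) {t : ℝ} (ht : t ∈ Icc 0 1) :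
    enorm2 (rescaled L π t - (c * t) • e) ≤ 2 * δ := by
  have hL' : (0 : ℝ) < L := Nat.cast_pos.2 hL
  obtain ⟨i, j, θ, ⟨hθ₀, hθ₁⟩, interpolation⟩ := exists_rescaled_sub_eq hL π c e ht
  have convex := mem_closedBall_zero_iff.1 <|
    convex_closedBall 0 (δ * L) (mem_closedBall_zero_iff.2 (h i)) (mem_closedBall_zero_iff.2 (h j))
      (sub_nonneg.2 hθ₁) hθ₀ (sub_add_cancel 1 θ)
  refine (enorm2_le_two_mul_norm _).trans (mul_le_mul_of_nonneg_left ?_ zero_le_two)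
  rwa [interpolation, norm_smul, norm_inv, Real.norm_of_nonneg hL'.le, inv_mul_le_iff₀ hL',
    mul_comm (L : ℝ)]

end Conclusion

/-- **Concentration of the 2-sided walk along the diagonal.** There is a constant `c > 0`
such that for every `ε > 0`, the `P^+_{unif,L}`-probability that the rescaled 2-sided
prudent path stays within distance `ε` of the segment `t ↦ c t (1,1)` tends to `1`. -/
theorem two_sided_prudent_concentration :
    ∃ c : ℝ, 0 < c ∧ ∀ ε : ℝ, 0 < ε →
      Tendsto (fun L : ℕ =>
          probUnifPlus L {π |
            ∀ t ∈ Set.Icc (0 : ℝ) 1, enorm2 (rescaled L π t - (c * t) • evec 1) ≤ ε})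
        atTop (nhds 1) := by
  obtain ⟨z, hz⟩ := exists_isCritical
  obtain ⟨C, hC, dominated⟩ := hz.exists_probUnifPlus_le
  refine ⟨speed z / 2, half_pos hz.speed_mem_Ioo.1, fun ε hε => ?_⟩
  have vanishing := (((hz.expSmall_chain_far (half_pos hε) WalkState.origin).pow_mul 5).const_mul
    hC.le).tendsto_sum fun L i => mul_nonneg hC.le
      (mul_nonneg (by positivity) (hz.chain_pow_indicator_nonneg i _ _))
  refine tendsto_of_tendsto_of_tendsto_of_le_of_le' (by simpa using vanishing.const_sub 1)
    tendsto_const_nhds ?_ (.of_forall fun L => probUnifPlus_le_one L _)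
  filter_upwards [eventually_gt_atTop 0] with L hL
  refine le_trans ?_ (one_sub_sum_le_probUnifPlus hL
    (B := fun i => {p | ε / 2 * L < ‖toR p - (speed z / 2 * (i : ℕ)) • evec 1‖})
    fun π near t ht => ?_)
  · rw [Finset.sum_range]
    gcongr with i
    exact dominated L i _ hL
  · exact (enorm2_rescaled_sub_le hL (fun i => not_lt.1 (near i)) ht).trans_eq (by ring)
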